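/- arXiv:2003.04425 — 6 statements merged into one kernel-verified Lean document; each statement's English description precedes it below -/
import Mathlib

section
/- Assume V is bounded and not P-almost surely constant, let σ > 0, and let g : ℝ → ℝ be a continuous function with values in (m, M). Then φ⁺_g(0) > φ⁻_g(0). -/
open MeasureTheory Filter Set

/-- Centered Gaussian density with variance `σ²`. -/
noncomputable def gq (σ z : ℝ) : ℝ :=
  Real.exp (-(z ^ 2) / (2 * σ ^ 2)) / (σ * Real.sqrt (2 * Real.pi))

/-- The averaged kernel `q̄(σ,x,z)`. -/
noncomputable def gqbar (σ x z : ℝ) : ℝ :=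
  if x = 0 then gq σ z else (1 / x) * ∫ y in (0:ℝ)..x, gq σ (y - z)

/-- `Φ⁺(y) = E[V·1_{V>y}]`. -/
noncomputable def Phip {Ω : Type*} [MeasurableSpace Ω] (P : Measure Ω) (V : Ω → ℝ) (y : ℝ) : ℝ :=
  ∫ ω in {ω | V ω > y}, V ω ∂P

/-- `Π⁺(y) = P(V > y)`. -/
noncomputable def Pip {Ω : Type*} [MeasurableSpace Ω] (P : Measure Ω) (V : Ω → ℝ) (y : ℝ) : ℝ :=
  (P {ω | V ω > y}).toReal

/-- `Φ⁻(y) = E[V·1_{V≤y}]`. -/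
noncomputable def Phim {Ω : Type*} [MeasurableSpace Ω] (P : Measure Ω) (V : Ω → ℝ) (y : ℝ) : ℝ :=
  ∫ ω in {ω | V ω ≤ y}, V ω ∂P

/-- `Π⁻(y) = P(V ≤ y)`. -/
noncomputable def Pim {Ω : Type*} [MeasurableSpace Ω] (P : Measure Ω) (V : Ω → ℝ) (y : ℝ) : ℝ :=
  (P {ω | V ω ≤ y}).toReal

/-- `Ψ⁺ = Φ⁺/Π⁺`. -/
noncomputable def Psip {Ω : Type*} [MeasurableSpace Ω] (P : Measure Ω) (V : Ω → ℝ) (y : ℝ) : ℝ :=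
  Phip P V y / Pip P V y

/-- `Ψ⁻ = Φ⁻/Π⁻`. -/
noncomputable def Psim {Ω : Type*} [MeasurableSpace Ω] (P : Measure Ω) (V : Ω → ℝ) (y : ℝ) : ℝ :=
  Phim P V y / Pim P V y

/-- `φ⁺_g`. -/
noncomputable def phip {Ω : Type*} [MeasurableSpace Ω] (P : Measure Ω) (V : Ω → ℝ)
    (σ : ℝ) (g : ℝ → ℝ) (x : ℝ) : ℝ :=
  (∫ z, Phip P V (g z) * gq σ (x - z)) / (∫ z, Pip P V (g z) * gq σ (x - z))

/-- `φ⁻_g`. -/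
noncomputable def phim {Ω : Type*} [MeasurableSpace Ω] (P : Measure Ω) (V : Ω → ℝ)
    (σ : ℝ) (g : ℝ → ℝ) (x : ℝ) : ℝ :=
  (∫ z, Phim P V (g z) * gq σ (x - z)) / (∫ z, Pim P V (g z) * gq σ (x - z))

/-- `φ_g`, equal to `φ⁺_g` on `[0,∞)` and `φ⁻_g` on `(−∞,0)`. -/
noncomputable def phig {Ω : Type*} [MeasurableSpace Ω] (P : Measure Ω) (V : Ω → ℝ)
    (σ : ℝ) (g : ℝ → ℝ) (x : ℝ) : ℝ :=
  if 0 ≤ x then phip P V σ g x else phim P V σ g x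

/-- The interior of the support of the law of `V` is `(m, M)` (with `V` bounded). -/
def SuppIoo {Ω : Type*} [MeasurableSpace Ω] (P : Measure Ω) (V : Ω → ℝ) (m M : ℝ) : Prop :=
  m < M ∧ (∀ᵐ ω ∂P, V ω ∈ Set.Icc m M) ∧
    (∀ y < M, 0 < P {ω | V ω > y}) ∧ (∀ y, m < y → 0 < P {ω | V ω ≤ y})

/-- Equation (E). -/
def SolvesE {Ω : Type*} [MeasurableSpace Ω] (P : Measure Ω) (V : Ω → ℝ)
    (σ : ℝ) (N : ℕ) (F : ℝ → ℝ) : Prop :=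
  ∀ x : ℝ, F x =
    ∫ z, ((1 / (N:ℝ)) * gq σ (x - z) + (((N:ℝ) - 1) / (N:ℝ)) * gqbar σ x z) * phig P V σ F z

lemma aux_gq_eq (σ : ℝ) (hσ : 0 < σ) (z : ℝ) :
    gq σ (0 - z) = ProbabilityTheory.gaussianPDFReal 0 (Real.toNNReal (σ ^ 2)) z := by
  unfold gq ProbabilityTheory.gaussianPDFReal
  have h1 : Real.sqrt (2 * Real.pi * σ ^ 2) = σ * Real.sqrt (2 * Real.pi) := by
    rw [Real.sqrt_mul (by positivity), Real.sqrt_sq hσ.le, mul_comm]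
  rw [Real.coe_toNNReal _ (sq_nonneg σ), h1]
  rw [div_eq_inv_mul]
  congr 3
  ring

lemma aux_int_pos (h : ℝ → ℝ) (hi : Integrable h) (hp : ∀ z, 0 < h z) : 0 < ∫ z, h z := by
  rw [integral_pos_iff_support_of_nonneg (fun z => (hp z).le) hi]
  have : Function.support h = Set.univ := by
    ext z; simp [(hp z).ne']
  simp [this]

lemma aux_phip_meas {Ω : Type*} [MeasurableSpace Ω] (P : Measure Ω) [IsProbabilityMeasure P]
    (V : Ω → ℝ) (hVmeas : Measurable V) : Measurable (Phip P V) := by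
  have hs : MeasurableSet {p : ℝ × Ω | V p.2 > p.1} :=
    measurableSet_lt measurable_fst (hVmeas.comp measurable_snd)
  have h1 : StronglyMeasurable
      (fun p : ℝ × Ω => ({p : ℝ × Ω | V p.2 > p.1}).indicator (fun p => V p.2) p) :=
    ((hVmeas.comp measurable_snd).indicator hs).stronglyMeasurable
  have h2 := h1.integral_prod_right' (ν := P)
  have h3 : Phip P V = fun y => ∫ ω, ({p : ℝ × Ω | V p.2 > p.1}).indicator (fun p => V p.2) (y, ω) ∂P := by
    funext y
    unfold Phip
    rw [← integral_indicator (measurableSet_lt measurable_const hVmeas)]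
    rfl
  rw [h3]
  exact h2.measurable

/-- If `V` is bounded (with support whose interior is `(m,M)`) and not a.s. constant,
`σ > 0`, and `g` is continuous with values in `(m, M)`, then `φ⁺_g(0) > φ⁻_g(0)`. -/
theorem stmt1 {Ω : Type*} [MeasurableSpace Ω] (P : Measure Ω) [IsProbabilityMeasure P]
    (V : Ω → ℝ) (hVmeas : Measurable V) (hV : Integrable V P)
    (m M : ℝ) (hsupp : SuppIoo P V m M)
    (hnc : ¬ ∃ c : ℝ, ∀ᵐ ω ∂P, V ω = c)
    (σ : ℝ) (hσ : 0 < σ)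
    (g : ℝ → ℝ) (hgc : Continuous g) (hgr : ∀ z, g z ∈ Set.Ioo m M) :
    phim P V σ g 0 < phip P V σ g 0 := by
  obtain ⟨hmM, hae, hup, hlo⟩ := hsupp
  have hms : ∀ y, MeasurableSet {ω | V ω > y} := fun y => measurableSet_lt measurable_const hVmeas
  have hms' : ∀ y, MeasurableSet {ω | V ω ≤ y} := fun y => measurableSet_le hVmeas measurable_const
  have hcompl : ∀ y, {ω | V ω ≤ y} = {ω | V ω > y}ᶜ := by
    intro y; ext ω; simp
  set e : ℝ := ∫ ω, V ω ∂P with he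
  have hPhi : ∀ y, Phim P V y = e - Phip P V y := by
    intro y
    have := integral_add_compl (hms y) hV
    unfold Phim Phip
    rw [hcompl y]; linarith
  have hPi : ∀ y, Pim P V y = 1 - Pip P V y := by
    intro y
    unfold Pim Pip
    rw [hcompl y]
    exact probReal_compl_eq_one_sub (hms y)
  have hp0 : ∀ z, 0 < Pip P V (g z) := fun z =>
    ENNReal.toReal_pos (hup _ (hgr z).2).ne' (measure_ne_top _ _)
  have hp1 : ∀ z, 0 < Pim P V (g z) := fun z =>
    ENNReal.toReal_pos (hlo _ (hgr z).1).ne' (measure_ne_top _ _)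
  have hA : ∀ z, g z * Pip P V (g z) < Phip P V (g z) := by
    intro z
    have hi : IntegrableOn (fun ω => V ω - g z) {ω | V ω > g z} P :=
      (hV.sub (integrable_const _)).integrableOn
    have h1 : 0 < ∫ ω in {ω | V ω > g z}, (V ω - g z) ∂P := by
      rw [setIntegral_pos_iff_support_of_nonneg_ae _ hi]
      · have : Function.support (fun ω => V ω - g z) ∩ {ω | V ω > g z} = {ω | V ω > g z} := by
          ext ω
          simp only [mem_inter_iff, Function.mem_support, mem_ofPred_eq, and_iff_right_iff_imp]
          intro h; exact (sub_pos.2 h).ne'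
        rw [this]; exact hup _ (hgr z).2
      · filter_upwards [ae_restrict_mem (hms (g z))] with ω hω
        exact (sub_pos.2 hω).le
    rw [integral_sub hV.integrableOn (integrable_const _), setIntegral_const, smul_eq_mul] at h1
    unfold Phip Pip
    change _ < _ - (P {ω | V ω > g z}).toReal * g z at h1
    linarith
  have hB : ∀ z, Phim P V (g z) ≤ g z * Pim P V (g z) := by
    intro z
    have h1 : ∫ ω in {ω | V ω ≤ g z}, V ω ∂P ≤ ∫ ω in {ω | V ω ≤ g z}, g z ∂P :=
      setIntegral_mono_on hV.integrableOn (integrable_const _) (hms' _) (fun ω hω => hω)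
    rw [setIntegral_const, smul_eq_mul] at h1
    unfold Phim Pim
    change _ ≤ (P {ω | V ω ≤ g z}).toReal * g z at h1
    linarith
  have hC : ∀ z, 0 < Phip P V (g z) - e * Pip P V (g z) := by
    intro z
    have h1 := mul_lt_mul_of_pos_right (hA z) (hp1 z)
    have h2 := mul_le_mul_of_nonneg_left (hB z) (hp0 z).le
    rw [hPhi] at h2
    rw [hPi] at h1 h2
    nlinarith
  have hqpos : ∀ z, 0 < gq σ (0 - z) := fun z => by unfold gq; positivity
  have hq : (fun z => gq σ (0 - z))
      = ProbabilityTheory.gaussianPDFReal 0 (Real.toNNReal (σ ^ 2)) := funext (aux_gq_eq σ hσ)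
  have hqi : Integrable (fun z => gq σ (0 - z)) := by
    rw [hq]; exact ProbabilityTheory.integrable_gaussianPDFReal _ _
  have hq1 : ∫ z, gq σ (0 - z) = 1 := by
    rw [hq]
    apply ProbabilityTheory.integral_gaussianPDFReal_eq_one
    exact (Real.toNNReal_pos.2 (by positivity)).ne'
  have hPm : Measurable (Pip P V) := by
    have : Antitone (Pip P V) := by
      intro a b hab
      exact ENNReal.toReal_mono (measure_ne_top _ _)
        (measure_mono (fun ω (hω : b < V ω) => lt_of_le_of_lt hab hω))
    exact this.measurable
  have hI1 : Integrable (fun z => Pip P V (g z) * gq σ (0 - z)) := by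
    refine hqi.bdd_mul (c := 1) (hPm.comp hgc.measurable).aestronglyMeasurable ?_
    refine Eventually.of_forall fun z => ?_
    rw [Real.norm_of_nonneg (hp0 z).le]
    have := hp1 z
    rw [hPi] at this; linarith
  have hI2 : Integrable (fun z => Phip P V (g z) * gq σ (0 - z)) := by
    refine hqi.bdd_mul (c := ∫ ω, ‖V ω‖ ∂P)
      ((aux_phip_meas P V hVmeas).comp hgc.measurable).aestronglyMeasurable ?_
    refine Eventually.of_forall fun z => ?_
    unfold Phip
    exact (norm_integral_le_integral_norm _).trans
      (setIntegral_le_integral hV.norm (Eventually.of_forall fun _ => norm_nonneg _))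
  have hp : 0 < ∫ z, Pip P V (g z) * gq σ (0 - z) :=
    aux_int_pos _ hI1 fun z => mul_pos (hp0 z) (hqpos z)
  have eqm : (fun z => Pim P V (g z) * gq σ (0 - z))
      = fun z => gq σ (0 - z) - Pip P V (g z) * gq σ (0 - z) := by
    funext z; rw [hPi]; ring
  have hp' : 0 < ∫ z, Pim P V (g z) * gq σ (0 - z) := by
    refine aux_int_pos _ ?_ fun z => mul_pos (hp1 z) (hqpos z)
    rw [eqm]; exact hqi.sub hI1
  have e1 : ∫ z, Pim P V (g z) * gq σ (0 - z) = 1 - ∫ z, Pip P V (g z) * gq σ (0 - z) := by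
    rw [eqm, integral_sub hqi hI1, hq1]
  have e2 : ∫ z, Phim P V (g z) * gq σ (0 - z) = e - ∫ z, Phip P V (g z) * gq σ (0 - z) := by
    have : (fun z => Phim P V (g z) * gq σ (0 - z))
      = fun z => e * gq σ (0 - z) - Phip P V (g z) * gq σ (0 - z) := by
      funext z; rw [hPhi]; ring
    rw [this, integral_sub (hqi.const_mul e) hI2, integral_const_mul, hq1, mul_one]
  have hfin : 0 < (∫ z, Phip P V (g z) * gq σ (0 - z))
      - e * ∫ z, Pip P V (g z) * gq σ (0 - z) := by
    rw [← integral_const_mul, ← integral_sub hI2 (hI1.const_mul e)]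
    refine aux_int_pos _ (hI2.sub (hI1.const_mul e)) fun z => ?_
    have := mul_pos (hC z) (hqpos z)
    linarith
  unfold phim phip
  rw [div_lt_div_iff₀ hp' hp, e1, e2]
  linarith
end

section
/- Assume V is bounded, let σ > 0, and let g : ℝ → ℝ be a nondecreasing Borel function with values in (m, M). Then φ⁺_g and φ⁻_g are nondecreasing functions on ℝ, and for every x ∈ ℝ one has φ⁺_g(x) ≤ ∫_ℝ Ψ⁺(g(z)) q(σ, x−z) dz and φ⁻_g(x) ≥ ∫_ℝ Ψ⁻(g(z)) q(σ, x−z) dz, where Ψ⁺ = Φ⁺/Π⁺ and Ψ⁻ = Φ⁻/Π⁻. -/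
open MeasureTheory Filter Set

lemma sym_int_le (a b c d : ℝ → ℝ) (ha : Integrable a) (hb : Integrable b)
    (hc : Integrable c) (hd : Integrable d)
    (h : ∀ z w, a z * b w + a w * b z ≤ c z * d w + c w * d z) :
    (∫ z, a z) * (∫ z, b z) ≤ (∫ z, c z) * (∫ z, d z) := by
  have key : ∀ f k : ℝ → ℝ, Integrable f → Integrable k →
      (Integrable (fun p : ℝ × ℝ => f p.1 * k p.2 + k p.1 * f p.2)
        ((volume : Measure ℝ).prod volume)) ∧
      ∫ p : ℝ × ℝ, (f p.1 * k p.2 + k p.1 * f p.2) ∂((volume : Measure ℝ).prod volume)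
        = 2 * ((∫ z, f z) * (∫ z, k z)) := by
    intro f k hf hk
    have i1 := hf.mul_prod hk
    have i2 := hk.mul_prod hf
    refine ⟨i1.add i2, ?_⟩
    rw [integral_add i1 i2, integral_prod_mul, integral_prod_mul]
    ring
  obtain ⟨i1, e1⟩ := key a b ha hb
  obtain ⟨i2, e2⟩ := key c d hc hd
  have := integral_mono i1 i2 (fun p => by
    have := h p.1 p.2
    dsimp only
    linarith)
  rw [e1, e2] at this
  linarith

lemma gq_eq (σ : ℝ) (hσ : 0 < σ) (x z : ℝ) :
    gq σ (x - z) = ProbabilityTheory.gaussianPDFReal x (σ ^ 2).toNNReal z := by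
  unfold gq ProbabilityTheory.gaussianPDFReal
  have h1 : Real.sqrt (2 * Real.pi * σ ^ 2) = σ * Real.sqrt (2 * Real.pi) := by
    rw [Real.sqrt_mul (by positivity), Real.sqrt_sq hσ.le, mul_comm]
  rw [Real.coe_toNNReal _ (sq_nonneg σ)]
  rw [h1, show (x - z) ^ 2 = (z - x) ^ 2 by ring]
  field_simp

lemma gq_pos (σ : ℝ) (hσ : 0 < σ) (z : ℝ) : 0 < gq σ z := by
  have := Real.pi_pos
  unfold gq
  positivity

lemma gq_integrable (σ : ℝ) (hσ : 0 < σ) (x : ℝ) : Integrable (fun z => gq σ (x - z)) := by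
  simp_rw [gq_eq σ hσ x]
  exact ProbabilityTheory.integrable_gaussianPDFReal _ _

lemma gq_integral (σ : ℝ) (hσ : 0 < σ) (x : ℝ) : ∫ z, gq σ (x - z) = 1 := by
  simp_rw [gq_eq σ hσ x]
  apply ProbabilityTheory.integral_gaussianPDFReal_eq_one
  intro h
  rw [Real.toNNReal_eq_zero] at h
  exact absurd h (not_le.2 (by positivity))

lemma gq_cross (σ : ℝ) (hσ : 0 < σ) {x y z w : ℝ} (hxy : x ≤ y) (hzw : z ≤ w) :
    gq σ (x - w) * gq σ (y - z) ≤ gq σ (x - z) * gq σ (y - w) := by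
  have := Real.pi_pos
  unfold gq
  rw [div_mul_div_comm, div_mul_div_comm, ← Real.exp_add, ← Real.exp_add, ← add_div, ← add_div]
  refine div_le_div_of_nonneg_right (Real.exp_le_exp.2
    (div_le_div_of_nonneg_right ?_ (by positivity))) (by positivity)
  nlinarith [mul_nonneg (sub_nonneg.2 hxy) (sub_nonneg.2 hzw)]

lemma abs_int (σ : ℝ) (hσ : 0 < σ) (A : ℝ → ℝ) (hA : Measurable A) (C : ℝ)
    (hC : ∀ z, |A z| ≤ C) (x : ℝ) : Integrable (fun z => A z * gq σ (x - z)) :=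
  (gq_integrable σ hσ x).bdd_mul hA.aestronglyMeasurable (Eventually.of_forall hC)

lemma wint_pos (σ : ℝ) (hσ : 0 < σ) (B : ℝ → ℝ) (hB : ∀ z, 0 < B z) (x : ℝ)
    (hi : Integrable (fun z => B z * gq σ (x - z))) : 0 < ∫ z, B z * gq σ (x - z) := by
  have hp : ∀ z, 0 < B z * gq σ (x - z) := fun z => mul_pos (hB z) (gq_pos σ hσ _)
  rw [integral_pos_iff_support_of_nonneg (fun z => (hp z).le) hi]
  have : Function.support (fun z => B z * gq σ (x - z)) = univ := by
    ext z; simpa using (hp z).ne'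
  rw [this]; simp

lemma ratio_mono (σ : ℝ) (hσ : 0 < σ) (A B : ℝ → ℝ) (hA : Measurable A) (hB : Measurable B)
    (C D : ℝ) (hC : ∀ z, |A z| ≤ C) (hD : ∀ z, |B z| ≤ D) (hpos : ∀ z, 0 < B z)
    (hcr : ∀ z w, z ≤ w → A z * B w ≤ A w * B z) :
    Monotone (fun x => (∫ z, A z * gq σ (x - z)) / (∫ z, B z * gq σ (x - z))) := by
  intro x y hxy
  have iA := abs_int σ hσ A hA C hC
  have iB := abs_int σ hσ B hB D hD
  dsimp only
  rw [div_le_div_iff₀ (wint_pos σ hσ B hpos x (iB x)) (wint_pos σ hσ B hpos y (iB y))]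
  apply sym_int_le _ _ _ _ (iA x) (iB y) (iA y) (iB x)
  have main : ∀ z w, z ≤ w →
      A z * gq σ (x - z) * (B w * gq σ (y - w)) + A w * gq σ (x - w) * (B z * gq σ (y - z)) ≤
      A z * gq σ (y - z) * (B w * gq σ (x - w)) + A w * gq σ (y - w) * (B z * gq σ (x - z)) := by
    intro z w hzw
    nlinarith [mul_nonneg (sub_nonneg.2 (hcr z w hzw)) (sub_nonneg.2 (gq_cross σ hσ hxy hzw))]
  intro z w
  rcases le_total z w with h | h
  · exact main z w h
  · have := main w z h
    linarith

lemma cheb (σ : ℝ) (hσ : 0 < σ) (f k : ℝ → ℝ) (hf : Measurable f) (hk : Measurable k)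
    (C D : ℝ) (hC : ∀ z, |f z| ≤ C) (hD : ∀ z, |k z| ≤ D)
    (hfm : Monotone f) (hkm : Monotone k) (x : ℝ) :
    (∫ z, f z * gq σ (x - z)) * (∫ z, k z * gq σ (x - z)) ≤ ∫ z, f z * k z * gq σ (x - z) := by
  have ifk := abs_int σ hσ (fun z => f z * k z) (hf.mul hk) (C * D) (fun z => by
    rw [abs_mul]
    exact mul_le_mul (hC z) (hD z) (abs_nonneg _) ((abs_nonneg _).trans (hC z))) x
  have := sym_int_le _ _ _ _ (abs_int σ hσ f hf C hC x) (abs_int σ hσ k hk D hD x) ifk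
    (gq_integrable σ hσ x) (by
      intro z w
      have h : 0 ≤ (f z - f w) * (k z - k w) := by
        rcases le_total z w with h | h
        · exact mul_nonneg_of_nonpos_of_nonpos (sub_nonpos.2 (hfm h)) (sub_nonpos.2 (hkm h))
        · exact mul_nonneg (sub_nonneg.2 (hfm h)) (sub_nonneg.2 (hkm h))
      nlinarith [mul_nonneg h (mul_pos (gq_pos σ hσ (x - z)) (gq_pos σ hσ (x - w))).le])
  rwa [gq_integral σ hσ, mul_one] at this

lemma bd_set {Ω : Type*} [MeasurableSpace Ω] (P : Measure Ω) [IsProbabilityMeasure P]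
    (V : Ω → ℝ) (C : ℝ) (hC : ∀ᵐ ω ∂P, |V ω| ≤ C) (S : Set Ω) :
    |∫ ω in S, V ω ∂P| ≤ C * (P S).toReal := by
  have := norm_setIntegral_le_of_norm_le_const_ae (μ := P) (s := S) (f := V) (C := C)
    (measure_lt_top _ _) (ae_restrict_of_ae hC)
  simpa [Measure.real] using this

lemma le_set {Ω : Type*} [MeasurableSpace Ω] (P : Measure Ω) [IsProbabilityMeasure P]
    (V : Ω → ℝ) (hV : Integrable V P)
    (c : ℝ) (S : Set Ω) (hS : MeasurableSet S) (h : ∀ ω ∈ S, c ≤ V ω) :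
    c * (P S).toReal ≤ ∫ ω in S, V ω ∂P := by
  have := setIntegral_mono_on (integrableOn_const (measure_ne_top P S) (C := c))
    hV.integrableOn hS h
  simpa [Measure.real, mul_comm] using this

lemma set_le {Ω : Type*} [MeasurableSpace Ω] (P : Measure Ω) [IsProbabilityMeasure P]
    (V : Ω → ℝ) (hV : Integrable V P)
    (c : ℝ) (S : Set Ω) (hS : MeasurableSet S) (h : ∀ ω ∈ S, V ω ≤ c) :
    ∫ ω in S, V ω ∂P ≤ c * (P S).toReal := by
  have := setIntegral_mono_on hV.integrableOn
    (integrableOn_const (measure_ne_top P S) (C := c)) hS h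
  simpa [Measure.real, mul_comm] using this

lemma split_set {Ω : Type*} [MeasurableSpace Ω] (P : Measure Ω) [IsProbabilityMeasure P]
    (V : Ω → ℝ) (hV : Integrable V P)
    (S T U : Set Ω) (hT : MeasurableSet T) (hd : Disjoint S T) (hU : U = S ∪ T) :
    (∫ ω in U, V ω ∂P = ∫ ω in S, V ω ∂P + ∫ ω in T, V ω ∂P) ∧
    (P U).toReal = (P S).toReal + (P T).toReal := by
  subst hU
  refine ⟨setIntegral_union hd hT hV.integrableOn hV.integrableOn, ?_⟩
  rw [measure_union hd hT, ENNReal.toReal_add (measure_ne_top _ _) (measure_ne_top _ _)]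

lemma crossp {Ω : Type*} [MeasurableSpace Ω] (P : Measure Ω) [IsProbabilityMeasure P]
    (V : Ω → ℝ) (hVmeas : Measurable V) (hV : Integrable V P)
    {y₁ y₂ : ℝ} (h : y₁ ≤ y₂) :
    Phip P V y₁ * Pip P V y₂ ≤ Phip P V y₂ * Pip P V y₁ := by
  have hm : MeasurableSet {ω | y₁ < V ω ∧ V ω ≤ y₂} :=
    (measurableSet_lt measurable_const hVmeas).inter (measurableSet_le hVmeas measurable_const)
  have hg : MeasurableSet {ω | V ω > y₂} := measurableSet_lt measurable_const hVmeas
  obtain ⟨e1, e2⟩ := split_set P V hV {ω | V ω > y₂} {ω | y₁ < V ω ∧ V ω ≤ y₂} {ω | V ω > y₁} hm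
    (by rw [Set.disjoint_left]; intro ω h1 h2; exact absurd h2.2 (not_le.2 h1))
    (by ext ω; simp only [mem_ofPred_eq, mem_union]; grind)
  have a1 := le_set P V hV y₂ _ hg (fun ω hω => le_of_lt hω)
  have a2 := set_le P V hV y₂ _ hm (fun ω hω => hω.2)
  unfold Phip Pip
  rw [e1, e2]
  nlinarith [mul_le_mul_of_nonneg_right a1
      (ENNReal.toReal_nonneg (a := P {ω | y₁ < V ω ∧ V ω ≤ y₂})),
    mul_le_mul_of_nonneg_right a2 (ENNReal.toReal_nonneg (a := P {ω | V ω > y₂}))]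

lemma crossm {Ω : Type*} [MeasurableSpace Ω] (P : Measure Ω) [IsProbabilityMeasure P]
    (V : Ω → ℝ) (hVmeas : Measurable V) (hV : Integrable V P)
    {y₁ y₂ : ℝ} (h : y₁ ≤ y₂) :
    Phim P V y₁ * Pim P V y₂ ≤ Phim P V y₂ * Pim P V y₁ := by
  have hm : MeasurableSet {ω | y₁ < V ω ∧ V ω ≤ y₂} :=
    (measurableSet_lt measurable_const hVmeas).inter (measurableSet_le hVmeas measurable_const)
  have hg : MeasurableSet {ω | V ω ≤ y₁} := measurableSet_le hVmeas measurable_const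
  obtain ⟨e1, e2⟩ := split_set P V hV {ω | V ω ≤ y₁} {ω | y₁ < V ω ∧ V ω ≤ y₂} {ω | V ω ≤ y₂} hm
    (by rw [Set.disjoint_left]; intro ω h1 h2; exact absurd h2.1 (not_lt.2 h1))
    (by ext ω; simp only [mem_ofPred_eq, mem_union]; grind)
  have a1 := set_le P V hV y₁ _ hg (fun ω hω => hω)
  have a2 := le_set P V hV y₁ _ hm (fun ω hω => hω.1.le)
  unfold Phim Pim
  rw [e1, e2]
  nlinarith [mul_le_mul_of_nonneg_right a1
      (ENNReal.toReal_nonneg (a := P {ω | y₁ < V ω ∧ V ω ≤ y₂})),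
    mul_le_mul_of_nonneg_right a2 (ENNReal.toReal_nonneg (a := P {ω | V ω ≤ y₁}))]

lemma psi_facts (A B : ℝ → ℝ) (hB : Measurable B) (C : ℝ) (hC : ∀ z, |A z| ≤ C * B z)
    (hB1 : ∀ z, B z ≤ 1) (hpos : ∀ z, 0 < B z)
    (hcr : ∀ z w, z ≤ w → A z * B w ≤ A w * B z) :
    Monotone (fun z => A z / B z) ∧ (∀ z, |A z / B z| ≤ C) ∧ Measurable A ∧
      (∀ z, |A z| ≤ C) ∧ (∀ z, |B z| ≤ 1) := by
  have h1 : Monotone (fun z => A z / B z) := fun z w h => by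
    dsimp only
    rw [div_le_div_iff₀ (hpos z) (hpos w)]; exact hcr z w h
  have h2 : ∀ z, |A z / B z| ≤ C := fun z => by
    rw [abs_div, abs_of_pos (hpos z), div_le_iff₀ (hpos z)]; exact hC z
  have h3 : Measurable A := by
    have := h1.measurable.mul hB
    convert this using 1
    ext z
    simp [(hpos z).ne']
  refine ⟨h1, h2, h3, fun z => ?_, fun z => by rw [abs_of_pos (hpos z)]; exact hB1 z⟩
  have hC0 : 0 ≤ C := (abs_nonneg _).trans (h2 z)
  nlinarith [hC z, hB1 z]

/-- If `V` is bounded, `σ > 0` and `g` is a nondecreasing Borel function with values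
in `(m, M)`, then `φ⁺_g` and `φ⁻_g` are nondecreasing and, for every `x`,
`φ⁺_g(x) ≤ ∫ Ψ⁺(g(z)) q(σ, x−z) dz` and `φ⁻_g(x) ≥ ∫ Ψ⁻(g(z)) q(σ, x−z) dz`. -/
theorem stmt2 {Ω : Type*} [MeasurableSpace Ω] (P : Measure Ω) [IsProbabilityMeasure P]
    (V : Ω → ℝ) (hVmeas : Measurable V) (hV : Integrable V P)
    (m M : ℝ) (hsupp : SuppIoo P V m M)
    (σ : ℝ) (hσ : 0 < σ)
    (g : ℝ → ℝ) (hgmeas : Measurable g) (hgmono : Monotone g)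
    (hgr : ∀ z, g z ∈ Set.Ioo m M) :
    Monotone (phip P V σ g) ∧ Monotone (phim P V σ g) ∧
    (∀ x : ℝ, phip P V σ g x ≤ ∫ z, Psip P V (g z) * gq σ (x - z)) ∧
    (∀ x : ℝ, phim P V σ g x ≥ ∫ z, Psim P V (g z) * gq σ (x - z)) := by
  obtain ⟨hmM, hbd, hp, hm⟩ := hsupp
  have hC : ∀ᵐ ω ∂P, |V ω| ≤ max |m| |M| := by
    filter_upwards [hbd] with ω hω
    exact abs_le_max_abs_abs hω.1 hω.2
  have prob1 : ∀ S : Set Ω, (P S).toReal ≤ 1 := fun S => by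
    simpa using ENNReal.toReal_mono ENNReal.one_ne_top (prob_le_one (μ := P) (s := S))
  have antiB : Antitone (fun z => Pip P V (g z)) := fun z w h =>
    ENNReal.toReal_mono (measure_ne_top _ _)
      (measure_mono fun ω hω => lt_of_le_of_lt (hgmono h) hω)
  have monoB : Monotone (fun z => Pim P V (g z)) := fun z w h =>
    ENNReal.toReal_mono (measure_ne_top _ _)
      (measure_mono fun ω hω => le_trans hω (hgmono h))
  have posp : ∀ z, 0 < Pip P V (g z) := fun z =>
    ENNReal.toReal_pos (hp _ (hgr z).2).ne' (measure_ne_top _ _)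
  have posm : ∀ z, 0 < Pim P V (g z) := fun z =>
    ENNReal.toReal_pos (hm _ (hgr z).1).ne' (measure_ne_top _ _)
  have crp : ∀ z w, z ≤ w → Phip P V (g z) * Pip P V (g w) ≤ Phip P V (g w) * Pip P V (g z) :=
    fun z w h => crossp P V hVmeas hV (hgmono h)
  have crm : ∀ z w, z ≤ w → Phim P V (g z) * Pim P V (g w) ≤ Phim P V (g w) * Pim P V (g z) :=
    fun z w h => crossm P V hVmeas hV (hgmono h)
  obtain ⟨p1, p2, p3, p4, p5⟩ := psi_facts (fun z => Phip P V (g z)) (fun z => Pip P V (g z))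
    antiB.measurable _ (fun z => bd_set P V _ hC _) (fun z => prob1 _) posp crp
  obtain ⟨m1, m2, m3, m4, m5⟩ := psi_facts (fun z => Phim P V (g z)) (fun z => Pim P V (g z))
    monoB.measurable _ (fun z => bd_set P V _ hC _) (fun z => prob1 _) posm crm
  refine ⟨ratio_mono σ hσ _ _ p3 antiB.measurable _ _ p4 p5 posp crp,
    ratio_mono σ hσ _ _ m3 monoB.measurable _ _ m4 m5 posm crm, fun x => ?_, fun x => ?_⟩
  · unfold phip
    rw [div_le_iff₀ (wint_pos σ hσ _ posp x (abs_int σ hσ _ antiB.measurable _ p5 x))]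
    have := cheb σ hσ _ (fun z => -Pip P V (g z)) p1.measurable antiB.measurable.neg _ 1 p2
      (fun z => by rw [abs_neg]; exact p5 z) p1 antiB.neg x
    have e : ∀ z, Phip P V (g z) / Pip P V (g z) * -Pip P V (g z) * gq σ (x - z)
        = -(Phip P V (g z) * gq σ (x - z)) := fun z => by
      have := (posp z).ne'
      field_simp
    simp only [e, neg_mul, integral_neg] at this
    unfold Psip
    linarith
  · unfold phim
    rw [ge_iff_le, le_div_iff₀ (wint_pos σ hσ _ posm x (abs_int σ hσ _ monoB.measurable _ m5 x))]
    have := cheb σ hσ _ (fun z => Pim P V (g z)) m1.measurable monoB.measurable _ 1 m2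
      m5 m1 monoB x
    have e : ∀ z, Phim P V (g z) / Pim P V (g z) * Pim P V (g z) * gq σ (x - z)
        = Phim P V (g z) * gq σ (x - z) := fun z => by
      have := (posm z).ne'
      field_simp
    simp only [e] at this
    exact this
end

section
/- For every x ∈ ℝ one has the identity g(x) = F(x) + N(N−1)·∫₀¹ (F(x) − F(x·y))·y^{N−1} dy. -/
open MeasureTheory Filter Set

lemma gq_integrable_aux (σ : ℝ) (hσ : 0 < σ) : Integrable (gq σ) := by
  have h1 : Integrable (fun z : ℝ => Real.exp (-(1 / (2 * σ ^ 2)) * z ^ 2)) :=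
    integrable_exp_neg_mul_sq (by positivity)
  have h2 := h1.div_const (σ * Real.sqrt (2 * Real.pi))
  refine h2.congr (Filter.Eventually.of_forall fun z => ?_)
  simp only [gq]
  congr 2
  ring

lemma g_continuous_aux (σ : ℝ) (hσ : 0 < σ)
    (h : ℝ → ℝ) (hmeas : Measurable h) (hmono : Monotone h) (hbdd : ∃ C, ∀ x, |h x| ≤ C) :
    Continuous (fun x => ∫ z, h (x + z) * gq σ z) := by
  obtain ⟨C, hC⟩ := hbdd
  have hq := gq_integrable_aux σ hσ
  rw [continuous_iff_continuousAt]
  intro x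
  refine MeasureTheory.continuousAt_of_dominated (bound := fun z => C * ‖gq σ z‖) ?_ ?_ ?_ ?_
  · refine Filter.Eventually.of_forall fun y => ?_
    exact (hmeas.comp (measurable_const_add y)).aestronglyMeasurable.mul hq.aestronglyMeasurable
  · refine Filter.Eventually.of_forall fun y => Filter.Eventually.of_forall fun z => ?_
    rw [norm_mul]
    exact mul_le_mul_of_nonneg_right (hC _) (norm_nonneg _)
  · exact hq.norm.const_mul C
  · have hc : Set.Countable {z : ℝ | ¬ ContinuousAt h (x + z)} :=
      hmono.countable_not_continuousAt.preimage (add_right_injective x)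
    filter_upwards [hc.ae_notMem volume] with z hz
    have hz' : ContinuousAt h (x + z) := by simpa using hz
    have : ContinuousAt (fun y : ℝ => h (y + z)) x :=
      ContinuousAt.comp (f := fun y : ℝ => y + z) (g := h) hz' (by fun_prop)
    exact this.mul continuousAt_const

/-- With `g(x) = ∫ h(x+z) q(σ,z) dz` and
`F(x) = g(x)/N + ((N−1)/(Nx))∫₀ˣ g(u) du` (`F(0) = g(0)`), for every `x` one has
`g(x) = F(x) + N(N−1)·∫₀¹ (F(x) − F(x·y))·y^{N−1} dy`. -/
theorem stmt3 (σ : ℝ) (hσ : 0 < σ) (N : ℕ) (hN : 1 ≤ N)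
    (h : ℝ → ℝ) (hmeas : Measurable h) (hmono : Monotone h) (hbdd : ∃ C, ∀ x, |h x| ≤ C)
    (g F : ℝ → ℝ)
    (hg : ∀ x, g x = ∫ z, h (x + z) * gq σ z)
    (hF0 : F 0 = g 0)
    (hF : ∀ x : ℝ, x ≠ 0 → F x = g x / N + (((N:ℝ) - 1) / (N * x)) * ∫ u in (0:ℝ)..x, g u) :
    ∀ x : ℝ, g x = F x + N * ((N:ℝ) - 1) * ∫ y in (0:ℝ)..1, (F x - F (x * y)) * y ^ (N - 1) := by
  intro x
  have hgc : Continuous g := by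
    have := g_continuous_aux σ hσ h hmeas hmono hbdd
    rwa [← funext hg] at this
  by_cases hx : x = 0
  · subst hx
    simp [hF0]
  obtain ⟨m, rfl⟩ : ∃ m, N = m + 1 := ⟨N - 1, by omega⟩
  rcases m with _ | n
  · have := hF x hx
    simp at this
    simp [this]
  have hN0 : ((n : ℝ) + 2) ≠ 0 := by positivity
  set G : ℝ → ℝ := fun t => ∫ u in (0:ℝ)..t, g u with hG
  have hGd : ∀ t, HasDerivAt G (g t) t := fun t =>
    intervalIntegral.integral_hasDerivAt_right (hgc.intervalIntegrable _ _)
      (hgc.stronglyMeasurableAtFilter _ _) hgc.continuousAt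
  have hGc : Continuous G := continuous_iff_continuousAt.2 fun t => (hGd t).continuousAt
  have hG0 : G 0 = 0 := by simp [hG]
  set D : ℝ → ℝ := fun y => ((n : ℝ) + 1) * y ^ n * G (x * y) + y ^ (n + 1) * (g (x * y) * x)
    with hD
  have hDc : Continuous D := by fun_prop
  have hDd : ∀ y, HasDerivAt (fun y => y ^ (n + 1) * G (x * y)) (D y) y := by
    intro y
    have h1 : HasDerivAt (fun y : ℝ => y ^ (n + 1)) (((n : ℝ) + 1) * y ^ n) y := by
      simpa using hasDerivAt_pow (n + 1) y
    have h2 : HasDerivAt (fun y : ℝ => x * y) x y := by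
      simpa using (hasDerivAt_id y).const_mul x
    have h3 : HasDerivAt (fun y : ℝ => G (x * y)) (g (x * y) * x) y :=
      HasDerivAt.comp y (hGd (x * y)) h2
    exact h1.mul h3
  have hDi : ∫ y in (0:ℝ)..1, D y = G x := by
    rw [intervalIntegral.integral_eq_sub_of_hasDerivAt (fun y _ => hDd y)
      (hDc.intervalIntegrable _ _)]
    simp
  have hfd : ∀ y : ℝ, (F x - F (x * y)) * y ^ (n + 1)
      = F x * y ^ (n + 1) - (1 / (((n : ℝ) + 2) * x)) * D y := by
    intro y
    by_cases hy : y = 0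
    · subst hy
      simp [hD, hG0]
    · have e := hF (x * y) (mul_ne_zero hx hy)
      have e2 : (∫ u in (0:ℝ)..(x * y), g u) = G (x * y) := rfl
      rw [e2] at e
      rw [e]
      simp only [hD]
      push_cast
      have : (n : ℝ) + 1 + 1 ≠ 0 := by positivity
      field_simp
      ring
  have hI : ∫ y in (0:ℝ)..1, (F x - F (x * y)) * y ^ (n + 1 + 1 - 1)
      = F x / ((n : ℝ) + 2) - (1 / (((n : ℝ) + 2) * x)) * G x := by
    have : n + 1 + 1 - 1 = n + 1 := by omega
    rw [this]
    simp_rw [hfd]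
    rw [intervalIntegral.integral_sub
      (Continuous.intervalIntegrable (by fun_prop) _ _)
      (Continuous.intervalIntegrable (by fun_prop) _ _),
      intervalIntegral.integral_const_mul, intervalIntegral.integral_const_mul, hDi,
      integral_pow]
    push_cast
    have : (n : ℝ) + 1 + 1 = n + 2 := by ring
    rw [this]
    simp
    ring
  rw [hI]
  have e := hF x hx
  have e2 : (∫ u in (0:ℝ)..x, g u) = G x := rfl
  rw [e2] at e
  rw [e]
  push_cast
  have : (n : ℝ) + 1 + 1 = n + 2 := by ring
  rw [this]
  field_simp
  ring
end

section
/- The expected aggregate profit of the liquidity suppliers is zero: E[∫₀^Y (h(y) − V) dy] = 0, equivalently E[∫₀^Y h(y) dy] = E[V·Y]. -/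
open MeasureTheory Filter Set

lemma oneSided {Ω : Type*} [MeasurableSpace Ω] (P : Measure Ω) [IsProbabilityMeasure P]
    (V Y : Ω → ℝ) (hVmeas : Measurable V) (hYmeas : Measurable Y)
    (hV : Integrable V P) (hVY : Integrable (fun ω => V ω * max (Y ω) 0) P)
    (hpos : ∀ y : ℝ, 0 < y → 0 < P {ω | Y ω ≥ y})
    (h : ℝ → ℝ)
    (hhp : ∀ y : ℝ, 0 < y →
      h y = (∫ ω in {ω | Y ω ≥ y}, V ω ∂P) / (P {ω | Y ω ≥ y}).toReal)
    (hint : Integrable (fun ω => ∫ u in Ioc 0 (Y ω), |h u|) P) :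
    (∀ y : ℝ, IntegrableOn h (Ioc 0 y) volume) ∧
    Integrable (fun ω => ∫ u in Ioc 0 (Y ω), h u) P ∧
    (∫ ω, (∫ u in Ioc 0 (Y ω), h u) ∂P) = ∫ ω, V ω * max (Y ω) 0 ∂P := by
  have hS : MeasurableSet {p : Ω × ℝ | p.2 ≤ Y p.1} :=
    measurableSet_le measurable_snd (hYmeas.comp measurable_fst)
  have hS' : MeasurableSet {p : ℝ × Ω | p.1 ≤ Y p.2} :=
    measurableSet_le measurable_fst (hYmeas.comp measurable_snd)
  have hT : MeasurableSet {p : Ω × ℝ | p.2 ∈ Ioc 0 (Y p.1)} :=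
    (measurableSet_lt measurable_const measurable_snd).inter hS
  have hYs : ∀ u : ℝ, MeasurableSet {ω | Y ω ≥ u} := fun u => measurableSet_le measurable_const hYmeas
  set g : ℝ → ℝ := fun u => (∫ ω in {ω | Y ω ≥ u}, V ω ∂P) / (P {ω | Y ω ≥ u}).toReal with hg
  have hgm : Measurable g := by
    apply Measurable.div
    · have h1 : StronglyMeasurable (fun u : ℝ => ∫ ω, ({p : ℝ × Ω | p.1 ≤ Y p.2}.indicator (fun p => V p.2)) (u, ω) ∂P) := by
        apply StronglyMeasurable.integral_prod_right'
        exact ((hVmeas.comp measurable_snd).indicator hS').stronglyMeasurable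
      convert h1.measurable using 2 with u
      rw [← integral_indicator (hYs u)]
      rfl
    · exact (measurable_measure_prodMk_left hS').ennreal_toReal
  have hhg : ∀ u, 0 < u → h u = g u := hhp
  have hppos : ∀ u, 0 < u → 0 < (P {ω | Y ω ≥ u}).toReal := fun u hu =>
    ENNReal.toReal_pos (hpos u hu).ne' (measure_ne_top _ _)
  have hgI : ∀ y : ℝ, IntegrableOn g (Ioc 0 y) volume := by
    intro y
    rcases le_or_gt y 0 with hy | hy
    · simp [Ioc_eq_empty (not_lt.2 hy)]
    apply Measure.integrableOn_of_bounded (M := (∫ ω, |V ω| ∂P) / (P {ω | Y ω ≥ y}).toReal)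
    · simp
    · exact hgm.aestronglyMeasurable
    · refine (ae_restrict_iff' measurableSet_Ioc).2 (ae_of_all _ fun u hu => ?_)
      rw [hg]
      simp only [Real.norm_eq_abs, abs_div]
      rw [abs_of_pos (hppos u hu.1)]
      apply div_le_div₀ (integral_nonneg fun _ => abs_nonneg _) _ (hppos y hy)
      · apply ENNReal.toReal_mono (measure_ne_top _ _)
        apply measure_mono
        intro ω hω
        exact le_trans hu.2 hω
      · refine (abs_integral_le_integral_abs).trans ?_
        exact setIntegral_le_integral hV.abs (ae_of_all _ fun _ => abs_nonneg _)
  have hcong : ∀ y, ∫ u in Ioc 0 y, h u = ∫ u in Ioc 0 y, g u := fun y =>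
    setIntegral_congr_fun measurableSet_Ioc fun u hu => hhg u hu.1
  have hcong' : ∀ y, ∫ u in Ioc 0 y, |h u| = ∫ u in Ioc 0 y, |g u| := fun y =>
    setIntegral_congr_fun measurableSet_Ioc fun u hu => by simp only [hhg u hu.1]
  simp only [hcong, hcong'] at hint ⊢
  set T : Set (Ω × ℝ) := {p : Ω × ℝ | p.2 ∈ Ioc 0 (Y p.1)} with hTdef
  set F : Ω × ℝ → ℝ := T.indicator (fun p => g p.2) with hF
  set K : Ω × ℝ → ℝ := T.indicator (fun p => V p.1) with hK
  have hFs : ∀ ω, (fun u => F (ω, u)) = (Ioc 0 (Y ω)).indicator g := fun ω => rfl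
  have hKs : ∀ ω, (fun u => K (ω, u)) = (Ioc 0 (Y ω)).indicator (fun _ => V ω) := fun ω => rfl
  have hFi : Integrable F (P.prod volume) := by
    rw [integrable_prod_iff (f := F) ((hgm.comp measurable_snd).indicator hT).aestronglyMeasurable]
    refine ⟨ae_of_all _ fun ω => ?_, ?_⟩
    · rw [hFs, integrable_indicator_iff measurableSet_Ioc]
      exact hgI _
    · convert hint using 2 with ω
      rw [← integral_indicator measurableSet_Ioc]
      congr 1
      ext u
      rw [show F (ω, u) = (Ioc 0 (Y ω)).indicator g u from rfl, norm_indicator_eq_indicator_norm]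
      rfl
  have hKi : Integrable K (P.prod volume) := by
    rw [integrable_prod_iff (f := K) ((hVmeas.comp measurable_fst).indicator hT).aestronglyMeasurable]
    refine ⟨ae_of_all _ fun ω => ?_, ?_⟩
    · rw [hKs, integrable_indicator_iff measurableSet_Ioc]
      simp
    · convert hVY.abs using 2 with ω
      trans ∫ u in Ioc 0 (Y ω), |V ω|
      · rw [← integral_indicator measurableSet_Ioc]
        congr 1
        ext u
        rw [show K (ω, u) = (Ioc 0 (Y ω)).indicator (fun _ => V ω) u from rfl, norm_indicator_eq_indicator_norm]
        rfl
      · simp [abs_mul, abs_of_nonneg (le_max_right (Y ω) 0), mul_comm, Measure.real, ENNReal.toReal_ofReal']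
  have hF1 : ∀ ω, ∫ u, F (ω, u) = ∫ u in Ioc 0 (Y ω), g u := fun ω => by
    rw [hFs, integral_indicator measurableSet_Ioc]
  have hK1 : ∀ ω, ∫ u, K (ω, u) = V ω * max (Y ω) 0 := fun ω => by
    rw [hKs, integral_indicator measurableSet_Ioc]
    simp [mul_comm, Measure.real, ENNReal.toReal_ofReal']
  refine ⟨fun y => ((integrableOn_congr_fun (fun u hu => hhg u hu.1) measurableSet_Ioc).2 (hgI y)), ?_, ?_⟩
  · simpa only [hF1] using hFi.integral_prod_left
  · simp only [← hF1, ← hK1]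
    rw [integral_integral_swap (f := fun ω u => F (ω, u)) hFi,
      integral_integral_swap (f := fun ω u => K (ω, u)) hKi]
    congr 1
    ext u
    rcases le_or_gt u 0 with hu | hu
    · have : ∀ ω, (ω, u) ∉ T := fun ω hω => absurd hω.1 (not_lt.2 hu)
      simp [hF, hK, this]
    · have e1 : (fun ω => F (ω, u)) = {ω | Y ω ≥ u}.indicator (fun _ => g u) := by
        ext ω; simp [hF, hTdef, indicator, hu]
      have e2 : (fun ω => K (ω, u)) = {ω | Y ω ≥ u}.indicator V := by
        ext ω; simp [hK, hTdef, indicator, hu]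
      rw [e1, e2, integral_indicator (hYs u), integral_indicator (hYs u)]
      rw [setIntegral_const, smul_eq_mul, hg]
      exact mul_div_cancel₀ _ (hppos u hu).ne'

/-- With the book `h` given by tail expectations of `V` given the total demand `Y`,
the expected aggregate profit of the liquidity suppliers vanishes:
`E[∫₀^Y (h(y) − V) dy] = 0`, equivalently `E[∫₀^Y h(y) dy] = E[V·Y]`. -/
theorem stmt6 {Ω : Type*} [MeasurableSpace Ω] (P : Measure Ω) [IsProbabilityMeasure P]
    (V Y : Ω → ℝ) (hVmeas : Measurable V) (hYmeas : Measurable Y)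
    (hV : Integrable V P) (hVY : Integrable (fun ω => V ω * Y ω) P)
    (hpos : ∀ y : ℝ, 0 < y → 0 < P {ω | Y ω ≥ y})
    (hneg : ∀ y : ℝ, y < 0 → 0 < P {ω | Y ω ≤ y})
    (h : ℝ → ℝ)
    (hhp : ∀ y : ℝ, 0 < y →
      h y = (∫ ω in {ω | Y ω ≥ y}, V ω ∂P) / (P {ω | Y ω ≥ y}).toReal)
    (hhm : ∀ y : ℝ, y < 0 →
      h y = (∫ ω in {ω | Y ω ≤ y}, V ω ∂P) / (P {ω | Y ω ≤ y}).toReal)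
    (hint : Integrable (fun ω => ∫ u in (0:ℝ)..|Y ω|, |h (Real.sign (Y ω) * u)|) P) :
    (∫ ω, (∫ y in (0:ℝ)..(Y ω), (h y - V ω)) ∂P) = 0 ∧
    (∫ ω, (∫ y in (0:ℝ)..(Y ω), h y) ∂P) = ∫ ω, V ω * Y ω ∂P := by
  have hs : ∀ y : ℝ, {ω | Y ω ≤ -y} = {ω | -Y ω ≥ y} := fun y => by
    ext ω; simp only [mem_ofPred_eq]; constructor <;> intro _ <;> linarith
  have hmeasP : MeasurableSet {ω | 0 ≤ Y ω} := measurableSet_le measurable_const hYmeas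
  have hmeasN : MeasurableSet {ω | Y ω ≤ 0} := measurableSet_le hYmeas measurable_const
  have hp := oneSided P V Y hVmeas hYmeas hV
    (by
      refine Integrable.congr (hVY.indicator hmeasP) (ae_of_all _ fun ω => ?_)
      symm
      by_cases hy : 0 ≤ Y ω
      · simp [indicator, hy]
      · simp [indicator, hy, (not_le.1 hy).le]) hpos h hhp
    (by
      have hmp : MeasurableSet {ω | 0 < Y ω} := measurableSet_lt measurable_const hYmeas
      refine Integrable.congr (hint.indicator hmp) (ae_of_all _ fun ω => ?_)
      symm
      by_cases hy : 0 < Y ω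
      · simp [indicator, hy, Real.sign_of_pos hy, abs_of_pos hy, intervalIntegral.integral_of_le hy.le]
      · simp [indicator, hy])
  have hn := oneSided P V (fun ω => -Y ω) hVmeas hYmeas.neg hV
    (by
      convert (hVY.indicator hmeasN).neg using 2 with ω
      by_cases hy : Y ω ≤ 0
      · simp [indicator, hy]
      · simp [indicator, hy, (not_le.1 hy).le])
    (fun y hy => by have := hneg (-y) (by linarith); rwa [hs] at this)
    (fun u => h (-u))
    (fun y hy => by have := hhm (-y) (by linarith); rwa [hs] at this)
    (by
      have hmp : MeasurableSet {ω | Y ω < 0} := measurableSet_lt hYmeas measurable_const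
      refine Integrable.congr (hint.indicator hmp) (ae_of_all _ fun ω => ?_)
      symm
      by_cases hy : Y ω < 0
      · simp [indicator, hy, Real.sign_of_neg hy, abs_of_neg hy,
          intervalIntegral.integral_of_le (neg_pos.2 hy).le]
      · simp [indicator, hy])
  obtain ⟨hp0, hp1, hp2⟩ := hp
  obtain ⟨hn0, hn1, hn2⟩ := hn
  have hsplit : ∀ ω, ∫ y in (0:ℝ)..(Y ω), h y =
      (∫ u in Ioc 0 (Y ω), h u) - ∫ u in Ioc 0 (-Y ω), h (-u) := by
    intro ω
    rcases le_total 0 (Y ω) with hy | hy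
    · rw [intervalIntegral.integral_of_le hy, Ioc_eq_empty (show ¬ (0:ℝ) < -Y ω by linarith)]
      simp
    · rw [← intervalIntegral.integral_of_le (by linarith : (0:ℝ) ≤ -Y ω),
        intervalIntegral.integral_comp_neg, Ioc_eq_empty (show ¬ (0:ℝ) < Y ω by linarith),
        intervalIntegral.integral_symm]
      simp
  have hii : ∀ y, IntervalIntegrable h volume 0 y := by
    intro y
    rcases le_total 0 y with hy | hy
    · exact (intervalIntegrable_iff_integrableOn_Ioc_of_le hy).2 (hp0 y)
    · have := (intervalIntegrable_iff_integrableOn_Ioc_of_le (by linarith : (0:ℝ) ≤ -y)).2 (hn0 (-y))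
      rw [IntervalIntegrable.iff_comp_neg]
      simpa using this
  have hIh : Integrable (fun ω => ∫ y in (0:ℝ)..(Y ω), h y) P := by
    simp only [hsplit]; exact hp1.sub hn1
  have hVp : Integrable (fun ω => V ω * max (Y ω) 0) P := by
    refine Integrable.congr (hVY.indicator hmeasP) (ae_of_all _ fun ω => ?_)
    symm
    by_cases hy : 0 ≤ Y ω
    · simp [indicator, hy]
    · simp [indicator, hy, (not_le.1 hy).le]
  have hVn : Integrable (fun ω => V ω * max (-Y ω) 0) P := by
    convert (hVY.indicator hmeasN).neg using 2 with ω
    by_cases hy : Y ω ≤ 0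
    · simp [indicator, hy]
    · simp [indicator, hy, (not_le.1 hy).le]
  have key : (∫ ω, (∫ y in (0:ℝ)..(Y ω), h y) ∂P) = ∫ ω, V ω * Y ω ∂P := by
    simp only [hsplit]
    rw [integral_sub hp1 hn1, hp2, hn2, ← integral_sub hVp hVn]
    congr 1
    ext ω
    rw [← mul_sub]
    congr 1
    rcases le_total 0 (Y ω) with hy | hy <;> simp [hy]
  refine ⟨?_, key⟩
  have hsub : ∀ ω, ∫ y in (0:ℝ)..(Y ω), (h y - V ω) = (∫ y in (0:ℝ)..(Y ω), h y) - V ω * Y ω := by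
    intro ω
    rw [intervalIntegral.integral_sub (hii _) intervalIntegrable_const]
    simp [mul_comm]
  simp only [hsub]
  rw [integral_sub hIh hVY, key, sub_self]
end

section
/- Let N ≥ 1 and suppose F₁ : ℝ → (m, M) is a continuous nondecreasing solution of equation (E) with parameter σ = 1. Then for every σ > 0 the function x ↦ F₁(x/σ) is a solution of equation (E) with parameter σ (where both the Gaussian kernels and the maps φ are taken with the same parameter σ). -/
open MeasureTheory Filter Set

theorem gq_scale {σ : ℝ} (hσ : 0 < σ) (z : ℝ) : gq σ z = σ⁻¹ * gq 1 (z / σ) := by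
  unfold gq
  have h : -(z ^ 2) / (2 * σ ^ 2) = -((z / σ) ^ 2) / (2 * 1 ^ 2) := by
    field_simp
  rw [h]
  field_simp

theorem integral_rescale {σ : ℝ} (hσ : 0 < σ) (g : ℝ → ℝ) :
    (∫ z, σ⁻¹ * g (z / σ)) = ∫ z, g z := by
  rw [integral_const_mul, Measure.integral_comp_div, abs_of_pos hσ, smul_eq_mul,
    ← mul_assoc, inv_mul_cancel₀ hσ.ne', one_mul]

theorem intervalIntegral_rescale {σ : ℝ} (hσ : 0 < σ) (x : ℝ) (g : ℝ → ℝ) :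
    (∫ z in (0:ℝ)..x, σ⁻¹ * g (z / σ)) = ∫ z in (0:ℝ)..(x / σ), g z := by
  rw [intervalIntegral.integral_const_mul, intervalIntegral.integral_comp_div _ hσ.ne',
    zero_div, smul_eq_mul, ← mul_assoc, inv_mul_cancel₀ hσ.ne', one_mul]

theorem gqbar_scale {σ : ℝ} (hσ : 0 < σ) (x z : ℝ) :
    gqbar σ x z = σ⁻¹ * gqbar 1 (x / σ) (z / σ) := by
  have hne := hσ.ne'
  unfold gqbar
  by_cases hx : x = 0
  · simp [hx, gq_scale hσ]
  · have hx' : x / σ ≠ 0 := div_ne_zero hx hne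
    rw [if_neg hx, if_neg hx']
    have h : (∫ y in (0:ℝ)..x, gq σ (y - z))
        = ∫ y in (0:ℝ)..(x / σ), gq 1 (y - z / σ) := by
      have h1 : (∫ y in (0:ℝ)..x, gq σ (y - z))
          = ∫ y in (0:ℝ)..x, σ⁻¹ * (fun u => gq 1 (u - z / σ)) (y / σ) := by
        refine intervalIntegral.integral_congr (fun y _ => ?_)
        simp only
        rw [gq_scale hσ, sub_div]
      rw [h1]
      exact intervalIntegral_rescale hσ x (fun u => gq 1 (u - z / σ))
    rw [h, ← mul_assoc]
    congr 1
    field_simp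

theorem conv_scale {σ : ℝ} (hσ : 0 < σ) (A : ℝ → ℝ) (x : ℝ) :
    (∫ z, A (z / σ) * gq σ (x - z)) = ∫ z, A z * gq 1 (x / σ - z) := by
  have h1 : (∫ z, A (z / σ) * gq σ (x - z))
      = ∫ z, σ⁻¹ * (fun u => A u * gq 1 (x / σ - u)) (z / σ) := by
    congr 1
    ext z
    simp only
    rw [gq_scale hσ, sub_div]
    ring
  rw [h1]
  exact integral_rescale hσ (fun u => A u * gq 1 (x / σ - u))

theorem phig_scale {Ω : Type*} [MeasurableSpace Ω] (P : Measure Ω) (V : Ω → ℝ)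
    {σ : ℝ} (hσ : 0 < σ) (F : ℝ → ℝ) (x : ℝ) :
    phig P V σ (fun z => F (z / σ)) x = phig P V 1 F (x / σ) := by
  unfold phig phip phim
  have h0 : 0 ≤ x / σ ↔ 0 ≤ x := by
    rw [le_div_iff₀ hσ, zero_mul]
  simp only [h0]
  rw [conv_scale hσ (fun z => Phip P V (F z)), conv_scale hσ (fun z => Pip P V (F z)),
    conv_scale hσ (fun z => Phim P V (F z)), conv_scale hσ (fun z => Pim P V (F z))]

/-- If `F₁` is a continuous nondecreasing solution of (E) with parameter `σ = 1`
and values in `(m,M)`, then `x ↦ F₁(x/σ)` solves (E) with parameter `σ`. -/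
theorem stmt8 {Ω : Type*} [MeasurableSpace Ω] (P : Measure Ω) [IsProbabilityMeasure P]
    (V : Ω → ℝ) (hVmeas : Measurable V) (hV : Integrable V P)
    (m M : ℝ) (hsupp : SuppIoo P V m M)
    (N : ℕ) (hN : 1 ≤ N) (σ : ℝ) (hσ : 0 < σ)
    (F₁ : ℝ → ℝ) (hFc : Continuous F₁) (hFm : Monotone F₁)
    (hFr : ∀ x, F₁ x ∈ Set.Ioo m M)
    (hFsol : SolvesE P V 1 N F₁) :
    SolvesE P V σ N (fun x => F₁ (x / σ)) := by
  intro x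
  simp only
  rw [hFsol (x / σ)]
  symm
  have h1 : (∫ z, ((1 / (N:ℝ)) * gq σ (x - z) + (((N:ℝ) - 1) / (N:ℝ)) * gqbar σ x z)
        * phig P V σ (fun x => F₁ (x / σ)) z)
      = ∫ z, σ⁻¹ * (fun u => ((1 / (N:ℝ)) * gq 1 (x / σ - u)
        + (((N:ℝ) - 1) / (N:ℝ)) * gqbar 1 (x / σ) u) * phig P V 1 F₁ u) (z / σ) := by
    congr 1
    ext z
    simp only
    rw [phig_scale P V hσ, gqbar_scale hσ, gq_scale hσ, sub_div]
    ring
  rw [h1]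
  exact integral_rescale hσ (fun u => ((1 / (N:ℝ)) * gq 1 (x / σ - u)
        + (((N:ℝ) - 1) / (N:ℝ)) * gqbar 1 (x / σ) u) * phig P V 1 F₁ u)
end

section
/- Suppose V is symmetric, i.e. V and −V have the same law, and suppose Π⁺ is continuous. Let σ > 0, N ≥ 1, and let F : ℝ → (m, M) be a continuous solution of equation (E). Then the function x ↦ −F(−x) is also a solution of equation (E). Consequently, if (E) admits a unique continuous solution with values in (m, M), this solution satisfies F(−x) = −F(x) for all x ∈ ℝ. -/
open MeasureTheory Filter Set

theorem atom_zero {Ω : Type*} [MeasurableSpace Ω] (P : Measure Ω) [IsProbabilityMeasure P]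
    (V : Ω → ℝ) (hVmeas : Measurable V) (hcont : Continuous (Pip P V)) (y : ℝ) :
    P {ω | V ω = y} = 0 := by
  have key : ∀ t < y, P.real {ω | V ω = y} ≤ Pip P V t - Pip P V y := by
    intro t ht
    have hd : Disjoint {ω | V ω = y} {ω | V ω > y} := by
      rw [Set.disjoint_left]
      intro ω h1 h2
      simp only [Set.mem_ofPred_eq] at h1 h2
      linarith
    have hm : MeasurableSet {ω | V ω > y} := measurableSet_lt measurable_const hVmeas
    have h1 := measureReal_union (μ := P) hd hm
    have h2 : P.real ({ω | V ω = y} ∪ {ω | V ω > y}) ≤ P.real {ω | V ω > t} := by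
      refine measureReal_mono ?_ (measure_ne_top _ _)
      intro ω h
      rcases h with h | h <;> simp only [Set.mem_ofPred_eq] at h ⊢ <;> linarith
    have h3 : Pip P V t = P.real {ω | V ω > t} := rfl
    have h4 : Pip P V y = P.real {ω | V ω > y} := rfl
    linarith
  have hlim : Tendsto (fun t => Pip P V t - Pip P V y) (nhdsWithin y (Set.Iio y)) (nhds 0) := by
    have : Tendsto (fun t => Pip P V t - Pip P V y) (nhds y) (nhds (Pip P V y - Pip P V y)) :=
      (hcont.tendsto y).sub_const _
    rw [sub_self] at this
    exact this.mono_left nhdsWithin_le_nhds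
  have h0 : P.real {ω | V ω = y} ≤ 0 :=
    ge_of_tendsto hlim (by filter_upwards [self_mem_nhdsWithin] with t ht using key t ht)
  have h1 : P.real {ω | V ω = y} = 0 := le_antisymm h0 measureReal_nonneg
  exact (measureReal_eq_zero_iff).1 h1

theorem lt_ae_le {Ω : Type*} [MeasurableSpace Ω] (P : Measure Ω) [IsProbabilityMeasure P]
    (V : Ω → ℝ) (hVmeas : Measurable V) (hcont : Continuous (Pip P V)) (y : ℝ) :
    ({ω | V ω < y} : Set Ω) =ᵐ[P] {ω | V ω ≤ y} := by
  have h : ∀ᵐ ω ∂P, V ω ≠ y := by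
    rw [ae_iff]
    simpa using atom_zero P V hVmeas hcont y
  filter_upwards [h] with ω hω
  apply propext
  exact ⟨fun h => le_of_lt h, fun h => lt_of_le_of_ne h hω⟩

theorem sym_measure {Ω : Type*} [MeasurableSpace Ω] (P : Measure Ω)
    (V : Ω → ℝ) (hVmeas : Measurable V)
    (hsym : P.map V = P.map (fun ω => -V ω)) (s : Set ℝ) (hs : MeasurableSet s) :
    P (V ⁻¹' s) = P ((fun ω => -V ω) ⁻¹' s) := by
  rw [← Measure.map_apply hVmeas hs, hsym]
  exact Measure.map_apply hVmeas.neg hs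

theorem Pip_neg {Ω : Type*} [MeasurableSpace Ω] (P : Measure Ω) [IsProbabilityMeasure P]
    (V : Ω → ℝ) (hVmeas : Measurable V)
    (hsym : P.map V = P.map (fun ω => -V ω))
    (hcont : Continuous (Pip P V)) (y : ℝ) : Pip P V (-y) = Pim P V y := by
  unfold Pip Pim
  rw [← measure_congr (lt_ae_le P V hVmeas hcont y)]
  have h := sym_measure P V hVmeas hsym (Set.Ioi (-y)) measurableSet_Ioi
  have e1 : V ⁻¹' Set.Ioi (-y) = {ω | V ω > -y} := rfl
  have e2 : (fun ω => -V ω) ⁻¹' Set.Ioi (-y) = {ω | V ω < y} := by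
    ext ω; simp
  rw [e1, e2] at h
  rw [h]

theorem Phip_neg {Ω : Type*} [MeasurableSpace Ω] (P : Measure Ω) [IsProbabilityMeasure P]
    (V : Ω → ℝ) (hVmeas : Measurable V)
    (hsym : P.map V = P.map (fun ω => -V ω))
    (hcont : Continuous (Pip P V)) (y : ℝ) : Phip P V (-y) = -Phim P V y := by
  unfold Phip Phim
  rw [← setIntegral_congr_set (lt_ae_le P V hVmeas hcont y)]
  have h1 := setIntegral_map (μ := P) (g := V) (f := fun x : ℝ => x) (s := Set.Ioi (-y))
    measurableSet_Ioi measurable_id.aestronglyMeasurable hVmeas.aemeasurable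
  have h2 := setIntegral_map (μ := P) (g := fun ω => -V ω) (f := fun x : ℝ => x)
    (s := Set.Ioi (-y))
    measurableSet_Ioi measurable_id.aestronglyMeasurable hVmeas.neg.aemeasurable
  have e1 : V ⁻¹' Set.Ioi (-y) = {ω | V ω > -y} := rfl
  have e2 : (fun ω => -V ω) ⁻¹' Set.Ioi (-y) = {ω | V ω < y} := by
    ext ω; simp
  rw [e1] at h1
  rw [e2] at h2
  rw [← h1, hsym, h2, integral_neg]

theorem gq_neg (σ z : ℝ) : gq σ (-z) = gq σ z := by
  simp [gq]

theorem gqbar_neg (σ x z : ℝ) : gqbar σ (-x) (-z) = gqbar σ x z := by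
  unfold gqbar
  by_cases hx : x = 0
  · simp [hx, gq_neg]
  · have hx' : -x ≠ 0 := neg_ne_zero.2 hx
    rw [if_neg hx, if_neg hx']
    have h : ∫ y in (0:ℝ)..(-x), gq σ (y - -z) = -∫ y in (0:ℝ)..x, gq σ (y - z) := by
      have h2 := intervalIntegral.integral_comp_neg (a := 0) (b := x)
        (fun y => gq σ (y - -z))
      rw [neg_zero] at h2
      rw [intervalIntegral.integral_symm, ← h2]
      congr 1
      apply intervalIntegral.integral_congr
      intro y _
      change gq σ (-y - -z) = gq σ (y - z)
      rw [← gq_neg]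
      congr 1
      ring
    rw [h]
    field_simp

theorem conv_neg (σ x : ℝ) (f : ℝ → ℝ) :
    ∫ z, f (-z) * gq σ (x - z) = ∫ z, f z * gq σ (-x - z) := by
  rw [← integral_neg_eq_self (fun z => f z * gq σ (-x - z))]
  congr 1
  funext z
  rw [← gq_neg σ (x - z)]
  congr 2
  ring

theorem phig_neg {Ω : Type*} [MeasurableSpace Ω] (P : Measure Ω) [IsProbabilityMeasure P]
    (V : Ω → ℝ) (hVmeas : Measurable V)
    (hsym : P.map V = P.map (fun ω => -V ω))
    (hcont : Continuous (Pip P V)) (σ : ℝ) (F : ℝ → ℝ) (x : ℝ) (hx : x ≠ 0) :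
    phig P V σ (fun x => -F (-x)) x = -phig P V σ F (-x) := by
  have a1 := Pip_neg P V hVmeas hsym hcont
  have a2 := Phip_neg P V hVmeas hsym hcont
  have a3 : ∀ y, Pim P V (-y) = Pip P V y := fun y => by rw [← a1, neg_neg]
  have a4 : ∀ y, Phim P V (-y) = -Phip P V y := fun y => by
    have := a2 (-y)
    rw [neg_neg] at this
    rw [this, neg_neg]
  unfold phig
  rcases lt_or_gt_of_ne hx with h | h
  · rw [if_neg (not_le.2 h), if_pos (by linarith)]
    unfold phim phip
    simp only [a3, a4, neg_mul, integral_neg]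
    rw [conv_neg σ x (fun z => Phip P V (F z)), conv_neg σ x (fun z => Pip P V (F z)), neg_div]
  · rw [if_pos h.le, if_neg (by linarith)]
    unfold phim phip
    simp only [a1, a2, neg_mul, integral_neg]
    rw [conv_neg σ x (fun z => Phim P V (F z)), conv_neg σ x (fun z => Pim P V (F z)), neg_div]

theorem supp_sym {Ω : Type*} [MeasurableSpace Ω] (P : Measure Ω) [IsProbabilityMeasure P]
    (V : Ω → ℝ) (hVmeas : Measurable V) (m M : ℝ) (hsupp : SuppIoo P V m M)
    (hsym : P.map V = P.map (fun ω => -V ω)) : m = -M := by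
  obtain ⟨_, hae, h1, h2⟩ := hsupp
  have hae2 : ∀ᵐ ω ∂P, -V ω ∈ Set.Icc m M := by
    rw [ae_iff] at hae ⊢
    exact (sym_measure P V hVmeas hsym (Set.Icc m M)ᶜ measurableSet_Icc.compl).symm.trans hae
  apply le_antisymm
  · by_contra! hc
    have h := h1 (-m) (by linarith)
    apply h.ne'
    rw [measure_eq_zero_iff_ae_notMem]
    filter_upwards [hae2] with ω hω
    simp only [Set.mem_ofPred_eq, not_lt, gt_iff_lt]
    linarith [hω.1]
  · by_contra! hc
    have h := h2 ((m - M) / 2) (by linarith)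
    apply h.ne'
    rw [measure_eq_zero_iff_ae_notMem]
    filter_upwards [hae2] with ω hω
    simp only [Set.mem_ofPred_eq, not_le]
    linarith [hω.2]

/-- If `V` is symmetric and `Π⁺` is continuous, and `F` is a continuous solution of
(E) with values in `(m,M)`, then `x ↦ −F(−x)` also solves (E); hence if (E) has a unique such
solution, that solution is odd. -/
theorem stmt9 {Ω : Type*} [MeasurableSpace Ω] (P : Measure Ω) [IsProbabilityMeasure P]
    (V : Ω → ℝ) (hVmeas : Measurable V) (hV : Integrable V P)
    (m M : ℝ) (hsupp : SuppIoo P V m M)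
    (hsym : P.map V = P.map (fun ω => -V ω))
    (hcont : Continuous (Pip P V))
    (σ : ℝ) (hσ : 0 < σ) (N : ℕ) (hN : 1 ≤ N)
    (F : ℝ → ℝ) (hFc : Continuous F) (hFr : ∀ x, F x ∈ Set.Ioo m M)
    (hFsol : SolvesE P V σ N F) :
    SolvesE P V σ N (fun x => -F (-x)) ∧
    ((∀ G : ℝ → ℝ, Continuous G → (∀ x, G x ∈ Set.Ioo m M) → SolvesE P V σ N G → G = F) →
      ∀ x : ℝ, F (-x) = -F x) := by
  have hG : SolvesE P V σ N (fun x => -F (-x)) := by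
    intro x
    change -F (-x) = _
    rw [hFsol (-x), ← integral_neg_eq_self, ← integral_neg]
    apply integral_congr_ae
    have h0 : ∀ᵐ z : ℝ, z ≠ 0 := by
      rw [ae_iff]
      simp
    filter_upwards [h0] with z hz
    rw [phig_neg P V hVmeas hsym hcont σ F z hz, gqbar_neg, ← gq_neg σ (-x - -z)]
    have e : -(-x - -z) = x - z := by ring
    rw [e]
    ring
  refine ⟨hG, fun huniq x => ?_⟩
  have hm := supp_sym P V hVmeas m M hsupp hsym
  have h := huniq (fun x => -F (-x)) (hFc.comp continuous_neg).neg (fun x => by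
    have := hFr (-x)
    constructor <;> linarith [this.1, this.2]) hG
  have := congrFun h x
  linarith
end
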